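/- Let V be a finite type with a directed edge relation E : V → V → Prop and entry node v0 : V; let Σ be a type of event symbols, σ : V → Σ an event labeling, Q a finite type, q0 : Q, and δ : Q → Σ → Q. Define the product relation P on V × Q by P (v, q) (u, q') ↔ E v u ∧ q' = δ q (σ v). Then for every directed path v0 = u_0, u_1, …, u_n in G and every index i ≤ n, the product state (u_i, List.foldl δ q0 [σ(u_0), …, σ(u_{i-1})]) is reachable from (v0, q0) under the reflexive-transitive closure of P. -/

import Mathlib

theorem reflTransGen_of_castSucc_succ {α : Type*} {r : α → α → Prop} {n : ℕ}
    {x : Fin (n + 1) → α} (hx : ∀ i : Fin n, r (x i.castSucc) (x i.succ)) (i : Fin (n + 1)) :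
    Relation.ReflTransGen r (x 0) (x i) := by
  induction i using Fin.induction with
  | zero => exact .refl
  | succ i ih => exact ih.tail (hx i)

section Product

variable {V Ev Q : Type*}

/-- The one-step relation of the graph × DFA product: an edge `v → u` of the graph is followed while
the DFA reads the symbol `σ v` of the vertex being left. -/
def ProductStep (E : V → V → Prop) (σ : V → Ev) (δ : Q → Ev → Q) (p p' : V × Q) : Prop :=
  E p.1 p'.1 ∧ p'.2 = δ p.2 (σ p.1)

/-- The state of the DFA with transition function `δ` and initial state `q0` after reading the first
`i` letters of the word `w`. A word of length `n` has `n + 1` prefixes, so `i` ranges over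
`Fin (n + 1)`. -/
def prefixState (δ : Q → Ev → Q) (q0 : Q) {n : ℕ} (w : Fin n → Ev) (i : Fin (n + 1)) : Q :=
  (List.ofFn (Fin.take i i.is_le w)).foldl δ q0

theorem prefixState_zero (δ : Q → Ev → Q) (q0 : Q) {n : ℕ} (w : Fin n → Ev) :
    prefixState δ q0 w 0 = q0 :=
  rfl

theorem prefixState_succ (δ : Q → Ev → Q) (q0 : Q) {n : ℕ} (w : Fin n → Ev) (i : Fin n) :
    prefixState δ q0 w i.succ = δ (prefixState δ q0 w i.castSucc) (w i) := by
  have prefix_succ : List.ofFn (Fin.take i.succ i.succ.is_le w) =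
      List.ofFn (Fin.take i.castSucc i.castSucc.is_le w) ++ [w i] :=
    List.ofFn_succ_last
  rw [prefixState, prefix_succ, List.foldl_concat, prefixState]

theorem product_overapproximates_paths_general (E : V → V → Prop) (σ : V → Ev) (q0 : Q)
    (δ : Q → Ev → Q) {n : ℕ} {u : Fin (n + 1) → V}
    (hu : ∀ i : Fin n, E (u i.castSucc) (u i.succ)) (i : Fin (n + 1)) :
    Relation.ReflTransGen (ProductStep E σ δ) (u 0, q0)
      (u i, prefixState δ q0 (fun j : Fin n => σ (u j.castSucc)) i) := by
  let p (j : Fin (n + 1)) : V × Q := (u j, prefixState δ q0 (fun k : Fin n => σ (u k.castSucc)) j)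
  have step (j : Fin n) : ProductStep E σ δ (p j.castSucc) (p j.succ) :=
    ⟨hu j, prefixState_succ δ q0 _ j⟩
  simpa only [p, prefixState_zero] using reflTransGen_of_castSucc_succ step i

end Product

/-- **Product Over-Approximation of Graph Paths.** With the product relation
`P (v, q) (u, q') ↔ E v u ∧ q' = δ q (σ v)`, every directed path
`v0 = u_0, …, u_n` induces, at each index `i ≤ n`, the reachable product state
`(u_i, foldl δ q0 [σ u_0, …, σ u_{i-1}])` from `(v0, q0)`. -/
theorem product_overapproximates_paths
    {V : Type*} [Fintype V] {Ev : Type*} {Q : Type*} [Fintype Q]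
    (E : V → V → Prop) (v0 : V) (σ : V → Ev) (q0 : Q) (δ : Q → Ev → Q) :
    ∀ (n : ℕ) (u : Fin (n + 1) → V),
      u 0 = v0 →
      (∀ i : Fin n, E (u i.castSucc) (u i.succ)) →
      ∀ i : Fin (n + 1),
        Relation.ReflTransGen
          (fun p p' : V × Q => E p.1 p'.1 ∧ p'.2 = δ p.2 (σ p.1))
          (v0, q0)
          (u i,
            List.foldl δ q0
              (List.ofFn (fun j : Fin i.val =>
                σ (u ⟨j.val, Nat.lt_trans j.isLt i.isLt⟩)))) := by
  rintro n u rfl hu i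
  exact product_overapproximates_paths_general E σ q0 δ hu i
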